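/- (Existence of a transition point for the double Yukawa potential.) Let v₁ > v₂ > 0 and κ₁ > κ₂ > 0, and define ρ(s) := (πs)^{−1/2}·( v₁·exp(−κ₁²/(4s)) − v₂·exp(−κ₂²/(4s)) ) for s > 0 and E₂(A) := (1/2) ∫₀^∞ H(As)·ρ(s) ds for A > 0. Then E₂ takes both strictly positive and strictly negative values on (0,∞), and there exists a transition point A* > 0 with E₂(A*) = 0. -/

import Mathlib

open MeasureTheory

/-- The Jacobi theta function `θ₃(q) = Σ_{j ∈ ℤ} q^(j²)`. -/
noncomputable def theta3 (q : ℝ) : ℝ := ∑' j : ℤ, q ^ (j.natAbs ^ 2)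

/-- `Θ(t) := θ₃(e^{−t})`. -/
noncomputable def Θ (t : ℝ) : ℝ := theta3 (Real.exp (-t))

/-- `H(t) := t·Θ(t)·Θ'(t) + t²·Θ(t)·Θ''(t) − t²·(Θ'(t))²`. -/
noncomputable def Hfun (t : ℝ) : ℝ :=
  t * Θ t * deriv Θ t + t ^ 2 * Θ t * iteratedDeriv 2 Θ t - t ^ 2 * (deriv Θ t) ^ 2

noncomputable def Sk (k : ℕ) (t : ℝ) : ℝ := ∑' n : ℤ, (n : ℝ) ^ (2 * k) * Real.exp (-t * (n : ℝ) ^ 2)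

lemma Sk_summable (k : ℕ) {t : ℝ} (ht : 0 < t) :
    Summable (fun n : ℤ => (n : ℝ) ^ (2 * k) * Real.exp (-t * (n : ℝ) ^ 2)) := by
  have h := summable_pow_mul_jacobiTheta₂_term_bound 0 (T := t / Real.pi) (by positivity) (2 * k)
  refine h.congr fun n => ?_
  have h1 : ((|n| : ℤ) : ℝ) ^ (2 * k) = (n : ℝ) ^ (2 * k) := by
    push_cast
    rw [pow_mul, pow_mul, sq_abs]
  rw [h1]
  congr 2
  have := Real.pi_pos
  field_simp
  ring

lemma Sk_hasDerivAt (k : ℕ) {t : ℝ} (ht : 0 < t) : HasDerivAt (Sk k) (-Sk (k + 1) t) t := by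
  have h := hasDerivAt_tsum_of_isPreconnected (𝕜 := ℝ) (F := ℝ)
    (g := fun (n : ℤ) (t : ℝ) => (n : ℝ) ^ (2 * k) * Real.exp (-t * (n : ℝ) ^ 2))
    (g' := fun (n : ℤ) (t : ℝ) => -((n : ℝ) ^ (2 * (k + 1)) * Real.exp (-t * (n : ℝ) ^ 2)))
    (t := Set.Ioi (t / 2)) (y₀ := t) (y := t)
    (Sk_summable (k + 1) (t := t / 2) (by positivity)) isOpen_Ioi isPreconnected_Ioi
    (fun n y _ => by
      have h1 : HasDerivAt (fun y : ℝ => -y * (n : ℝ) ^ 2) (-1 * (n : ℝ) ^ 2) y :=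
        (hasDerivAt_neg y).mul_const _
      refine (h1.exp.const_mul ((n : ℝ) ^ (2 * k))).congr_deriv ?_
      rw [mul_add, pow_add]; ring)
    (fun n y hy => by
      have hy' : t / 2 < y := hy
      have h0 : 0 ≤ (n : ℝ) ^ (2 * (k + 1)) := by rw [pow_mul]; positivity
      rw [norm_neg, norm_mul, Real.norm_of_nonneg h0, Real.norm_of_nonneg (Real.exp_pos _).le]
      gcongr)
    (by simp [ht]) (Sk_summable k ht) (by simp [ht])
  rw [tsum_neg] at h
  exact h

lemma Theta_eq : Θ = Sk 0 := by
  funext t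
  unfold Θ theta3 Sk
  congr 1
  funext n
  rw [← Real.exp_nat_mul]
  have : ((n.natAbs : ℝ)) ^ 2 = (n : ℝ) ^ 2 := by
    rw [Nat.cast_natAbs]; push_cast; rw [sq_abs]
  simp only [mul_zero, pow_zero, one_mul]
  push_cast
  rw [this]
  ring_nf

lemma H_eq {t : ℝ} (ht : 0 < t) :
    Hfun t = Sk 0 t * (t ^ 2 * Sk 2 t - t * Sk 1 t) - (t * Sk 1 t) ^ 2 := by
  have h1 : ∀ s : ℝ, 0 < s → deriv (Sk 0) s = - Sk 1 s := fun s hs => (Sk_hasDerivAt 0 hs).deriv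
  have h2 : iteratedDeriv 2 (Sk 0) t = Sk 2 t := by
    rw [iteratedDeriv_succ, iteratedDeriv_one]
    have : deriv (Sk 0) =ᶠ[nhds t] fun s => - Sk 1 s := by
      filter_upwards [lt_mem_nhds ht] with s hs using h1 s hs
    rw [this.deriv_eq, (Sk_hasDerivAt 1 ht).fun_neg.deriv]
    simp
  unfold Hfun
  rw [Theta_eq, h2, h1 t ht]
  ring

lemma Sk_func {t : ℝ} (ht : 0 < t) : Sk 0 t = √(Real.pi / t) * Sk 0 (Real.pi ^ 2 / t) := by
  have hp := Real.pi_pos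
  have h := Real.tsum_exp_neg_mul_int_sq (a := t / Real.pi) (by positivity)
  unfold Sk
  simp only [mul_zero, pow_zero, one_mul]
  rw [← Real.sqrt_eq_rpow] at h
  have e1 : (fun n : ℤ => Real.exp (-Real.pi * (t / Real.pi) * (n : ℝ) ^ 2)) =
      fun n : ℤ => Real.exp (-t * (n : ℝ) ^ 2) := by
    funext n; congr 1; field_simp
  have e2 : (fun n : ℤ => Real.exp (-Real.pi / (t / Real.pi) * (n : ℝ) ^ 2)) =
      fun n : ℤ => Real.exp (-(Real.pi ^ 2 / t) * (n : ℝ) ^ 2) := by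
    funext n; congr 1; field_simp
  rw [e1, e2] at h
  rw [h, one_div, ← Real.sqrt_inv, inv_div]

lemma hd_w {t : ℝ} (ht : 0 < t) :
    HasDerivAt (fun t : ℝ => Real.pi ^ 2 / t) (-(Real.pi ^ 2 / t) / t) t := by
  have h := (hasDerivAt_inv ht.ne').const_mul (Real.pi ^ 2)
  simp only [← div_eq_mul_inv] at h
  refine h.congr_deriv ?_
  field_simp

lemma hd_h {t : ℝ} (ht : 0 < t) :
    HasDerivAt (fun t : ℝ => √(Real.pi / t)) (-√(Real.pi / t) / 2 / t) t := by
  have hp := Real.pi_pos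
  have h := (hasDerivAt_inv ht.ne').const_mul (Real.pi)
  simp only [← div_eq_mul_inv] at h
  have h2 := h.sqrt (by positivity)
  convert h2 using 1
  have h3 : √(Real.pi / t) ^ 2 = Real.pi / t := Real.sq_sqrt (by positivity)
  have h4 : 0 < √(Real.pi / t) := Real.sqrt_pos.2 (by positivity)
  have h5 : Real.pi = √(Real.pi / t) ^ 2 * t := by rw [h3]; field_simp
  generalize √(Real.pi / t) = z at *
  rw [h5]
  field_simp

lemma S1_func {t : ℝ} (ht : 0 < t) : t * Sk 1 t = √(Real.pi / t) *
    (Sk 0 (Real.pi ^ 2 / t) / 2 - (Real.pi ^ 2 / t) * Sk 1 (Real.pi ^ 2 / t)) := by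
  have hp := Real.pi_pos
  have hw : 0 < Real.pi ^ 2 / t := by positivity
  have h1 := (hd_h ht).mul ((Sk_hasDerivAt 0 hw).comp t (hd_w ht))
  have h2 := (Sk_hasDerivAt 0 ht).congr_of_eventuallyEq (f₁ := fun t => √(Real.pi / t) * Sk 0 (Real.pi ^ 2 / t))
    (by filter_upwards [lt_mem_nhds ht] with s hs using (Sk_func hs).symm)
  have h3 := h1.unique h2
  simp only [zero_add, Function.comp] at h3
  have h4 : t * Sk 1 t = - t * (-Sk 1 t) := by ring
  rw [h4, ← h3]
  generalize Real.pi ^ 2 / t = w at *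
  field_simp
  ring

lemma S2_func {t : ℝ} (ht : 0 < t) : t ^ 2 * Sk 2 t - t * Sk 1 t = √(Real.pi / t) *
    ((Sk 0 (Real.pi ^ 2 / t) / 2 - (Real.pi ^ 2 / t) * Sk 1 (Real.pi ^ 2 / t)) / 2 -
    (Real.pi ^ 2 / t) * (3 / 2 * Sk 1 (Real.pi ^ 2 / t) - (Real.pi ^ 2 / t) * Sk 2 (Real.pi ^ 2 / t))) := by
  have hp := Real.pi_pos
  have hw : 0 < Real.pi ^ 2 / t := by positivity
  have h0 : HasDerivAt (fun w => Sk 0 w / 2 - w * Sk 1 w)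
    (-Sk 1 (Real.pi ^ 2 / t) / 2 - (1 * Sk 1 (Real.pi ^ 2 / t) + Real.pi ^ 2 / t * - Sk 2 (Real.pi ^ 2 / t)))
      (Real.pi ^ 2 / t) :=
    ((Sk_hasDerivAt 0 hw).div_const 2).sub ((hasDerivAt_id' _).mul (Sk_hasDerivAt 1 hw))
  have h1 := (hd_h ht).mul (h0.comp t (hd_w ht))
  have h2 := ((hasDerivAt_id' t).fun_mul (Sk_hasDerivAt 1 ht)).congr_of_eventuallyEq (f₁ := fun t => √(Real.pi / t) *
    (Sk 0 (Real.pi ^ 2 / t) / 2 - (Real.pi ^ 2 / t) * Sk 1 (Real.pi ^ 2 / t)))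
    (by filter_upwards [lt_mem_nhds ht] with s hs using (S1_func hs).symm)
  have h3 := h1.unique h2
  simp only [Function.comp] at h3
  have h4 : t ^ 2 * Sk 2 t - t * Sk 1 t = - t * (1 * Sk 1 t + t * -Sk (1 + 1) t) := by
    norm_num; ring
  rw [h4, ← h3]
  generalize Real.pi ^ 2 / t = w at *
  field_simp
  ring

lemma H_func {t : ℝ} (ht : 0 < t) : Hfun t = Real.pi / t * Hfun (Real.pi ^ 2 / t) := by
  have hp := Real.pi_pos
  have hw : 0 < Real.pi ^ 2 / t := by positivity
  rw [H_eq ht, H_eq hw, S2_func ht, S1_func ht, Sk_func ht]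
  have h3 : Real.pi / t = √(Real.pi / t) ^ 2 := (Real.sq_sqrt (by positivity)).symm
  generalize Real.pi ^ 2 / t = w at *
  rw [h3, Real.sqrt_sq (Real.sqrt_nonneg _)]
  ring

lemma Sk_nonneg (k : ℕ) (t : ℝ) : 0 ≤ Sk k t :=
  tsum_nonneg fun n => by
    have h0 : 0 ≤ (n : ℝ) ^ (2 * k) := by rw [pow_mul]; positivity
    positivity

lemma Sk_term_nonneg (k : ℕ) (t : ℝ) (n : ℤ) : 0 ≤ (n : ℝ) ^ (2 * k) * Real.exp (-t * (n : ℝ) ^ 2) := by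
  have h0 : 0 ≤ (n : ℝ) ^ (2 * k) := by rw [pow_mul]; positivity
  positivity

lemma int_sq_ge (n : ℤ) (hn : n ≠ 0) : (1 : ℝ) ≤ (n : ℝ) ^ 2 := by
  have : (1 : ℤ) ≤ n ^ 2 := by have := sq_pos_of_ne_zero hn; omega
  exact_mod_cast this

lemma S0_ge {t : ℝ} (ht : 0 < t) : 1 ≤ Sk 0 t := by
  have := (Sk_summable 0 ht).le_tsum 0 (fun n _ => Sk_term_nonneg 0 t n)
  simpa [Sk] using this

lemma S0_anti {s t : ℝ} (hs : 0 < s) (h : s ≤ t) : Sk 0 t ≤ Sk 0 s := by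
  refine (Sk_summable 0 (hs.trans_le h)).tsum_le_tsum (fun n => ?_) (Sk_summable 0 hs)
  simp only [mul_zero, pow_zero, one_mul]
  gcongr

lemma S1_pos {t : ℝ} (ht : 0 < t) : 0 < Sk 1 t := by
  have := (Sk_summable 1 ht).le_tsum 1 (fun n _ => Sk_term_nonneg 1 t n)
  refine lt_of_lt_of_le ?_ this
  simp [Real.exp_pos]

lemma S12 {t : ℝ} (ht : 0 < t) : Sk 1 t ≤ Sk 2 t := by
  refine (Sk_summable 1 ht).tsum_le_tsum (fun n => ?_) (Sk_summable 2 ht)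
  refine mul_le_mul_of_nonneg_right ?_ (Real.exp_pos _).le
  rcases eq_or_ne n 0 with rfl | hn
  · simp
  · have := int_sq_ge n hn
    rw [mul_one, pow_mul]
    nlinarith

lemma Sk_decay (k : ℕ) {t : ℝ} (ht : 3 ≤ t) : Sk (k + 1) t ≤ Real.exp (3 - t) * Sk (k + 1) 3 := by
  unfold Sk
  rw [← tsum_mul_left]
  refine (Sk_summable (k + 1) (by linarith)).tsum_le_tsum (fun n => ?_)
    ((Sk_summable (k + 1) (by norm_num)).mul_left _)
  rcases eq_or_ne n 0 with rfl | hn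
  · simp
  · have h1 := int_sq_ge n hn
    have h0 : 0 ≤ (n : ℝ) ^ (2 * (k + 1)) := by rw [pow_mul]; positivity
    rw [mul_left_comm, ← Real.exp_add]
    gcongr
    nlinarith

lemma S1_three {t : ℝ} (ht : 3 ≤ t) : Sk 1 t ≤ 1 / 3 := by
  have hsg : HasSum (fun n : ℕ => (1 / 7 : ℝ) ^ (n + 1)) (1 / 6) := by
    have := (hasSum_geometric_of_lt_one (r := (1 / 7 : ℝ)) (by norm_num) (by norm_num)).mul_right (1 / 7)
    simp only [← pow_succ] at this
    have e : (1 - 1 / 7 : ℝ)⁻¹ * (1 / 7) = 1 / 6 := by norm_num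
    rwa [e] at this
  have hE : Real.exp (-2) ≤ 1 / 7 := by
    rw [Real.exp_neg, one_div]
    have := Real.exp_one_gt_d9
    have h2 : Real.exp 2 = Real.exp 1 * Real.exp 1 := by rw [← Real.exp_add]; norm_num
    apply inv_anti₀ (by norm_num)
    rw [h2]; nlinarith
  have key : ∀ n : ℕ, ((n : ℝ) + 1) ^ 2 * Real.exp (-t * ((n : ℝ) + 1) ^ 2) ≤ (1 / 7 : ℝ) ^ (n + 1) := by
    intro n
    set m : ℝ := (n : ℝ) + 1 with hm
    have hm1 : 1 ≤ m := by simp [hm]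
    calc m ^ 2 * Real.exp (-t * m ^ 2) ≤ Real.exp (m ^ 2) * Real.exp (-t * m ^ 2) := by
          gcongr
          linarith [Real.add_one_le_exp (m ^ 2)]
      _ = Real.exp (m ^ 2 + -t * m ^ 2) := by rw [Real.exp_add]
      _ ≤ Real.exp ((n + 1 : ℕ) * (-2)) := by
          gcongr
          push_cast
          rw [← hm]
          nlinarith
      _ = Real.exp (-2) ^ (n + 1) := by rw [Real.exp_nat_mul]
      _ ≤ _ := by gcongr
  have hs := Sk_summable 1 (t := t) (by linarith)
  have h := tsum_of_add_one_of_neg_add_one (f := fun n : ℤ => (n : ℝ) ^ (2 * 1) * Real.exp (-t * (n : ℝ) ^ 2))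
    (hs.comp_injective (i := fun n : ℕ => ((n : ℤ) + 1)) (fun a b h => by simpa using h))
    (hs.comp_injective (i := fun n : ℕ => -((n : ℤ) + 1)) (fun a b h => by simpa using h))
  unfold Sk
  rw [h]
  have hb : ∑' n : ℕ, ((n : ℝ) + 1) ^ 2 * Real.exp (-t * ((n : ℝ) + 1) ^ 2) ≤ 1 / 6 := by
    rw [← hsg.tsum_eq]
    refine Summable.tsum_le_tsum key ?_ hsg.summable
    exact Summable.of_nonneg_of_le (fun n => by positivity) key hsg.summable
  simp only [neg_mul] at hb
  push_cast
  simp only [even_two.neg_pow]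
  norm_num
  linarith

lemma H_large_pos {t : ℝ} (ht : 3 ≤ t) : 0 < Hfun t := by
  have h0 : 0 < t := by linarith
  rw [H_eq h0]
  have a := S0_ge h0
  have b := S1_pos h0
  have c := S12 h0
  have d := S1_three ht
  have e1 : t ^ 2 * Sk 1 t - t * Sk 1 t ≤ t ^ 2 * Sk 2 t - t * Sk 1 t := by gcongr
  have e2 : 0 < t * Sk 1 t := by positivity
  have e3 : (t * Sk 1 t) * (t - 1) ≤ Sk 0 t * (t ^ 2 * Sk 2 t - t * Sk 1 t) := by
    have e5 : 0 ≤ (t * Sk 1 t) * (t - 1) := mul_nonneg e2.le (by linarith)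
    calc _ ≤ t ^ 2 * Sk 2 t - t * Sk 1 t := by linarith
      _ ≤ _ := le_mul_of_one_le_left (by linarith) a
  have e4 : t * Sk 1 t < t - 1 := by nlinarith
  nlinarith

lemma H_large_le {t : ℝ} (ht : 3 ≤ t) :
    Hfun t ≤ (8 * Sk 0 3 * Sk 2 3 * Real.exp 3) * Real.exp (-t / 2) := by
  have h0 : 0 < t := by linarith
  rw [H_eq h0]
  have a := S0_ge h0
  have b := S1_pos h0
  have c := Sk_nonneg 2 t
  have d := Sk_decay 1 ht
  have e := S0_anti (by norm_num) ht
  have f : t ^ 2 ≤ 8 * Real.exp (t / 2) := by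
    have := Real.quadratic_le_exp_of_nonneg (x := t / 2) (by positivity)
    nlinarith
  have g : 0 ≤ Sk 0 t * (t * Sk 1 t) := by positivity
  calc _ ≤ t ^ 2 * Sk 0 t * Sk 2 t := by nlinarith [sq_nonneg (t * Sk 1 t)]
    _ ≤ (8 * Real.exp (t / 2)) * Sk 0 3 * (Real.exp (3 - t) * Sk 2 3) := by
        have := Sk_nonneg 0 t
        have := Sk_nonneg 0 3
        gcongr
    _ = 8 * Sk 0 3 * Sk 2 3 * (Real.exp (t / 2) * Real.exp (3 - t)) := by ring
    _ = _ := by rw [← Real.exp_add, mul_assoc _ (Real.exp 3), ← Real.exp_add]; ring_nf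

lemma H_pos {t : ℝ} (ht : 0 < t) : 0 < Hfun t := by
  have hp := Real.pi_gt_three
  rcases le_total 3 t with h | h
  · exact H_large_pos h
  · rw [H_func ht]
    have : 3 ≤ Real.pi ^ 2 / t := by rw [le_div_iff₀ ht]; nlinarith
    have := H_large_pos this
    positivity

lemma H_bound : ∃ C : ℝ, 0 < C ∧ ∀ t, 0 < t → Hfun t ≤ C * Real.exp (-t / 2) := by
  have hp := Real.pi_gt_three
  set C := (8 * Sk 0 3 * Sk 2 3 * Real.exp 3)
  have hC : 0 < C := by
    have := H_large_pos (le_refl 3)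
    have h2 := this.trans_le (H_large_le le_rfl)
    exact pos_of_mul_pos_left h2 (Real.exp_pos _).le
  refine ⟨C * Real.exp 2, by positivity, fun t ht => ?_⟩
  rcases le_total 3 t with h | h
  · refine (H_large_le h).trans ?_
    refine mul_le_mul_of_nonneg_right ?_ (Real.exp_pos _).le
    exact le_mul_of_one_le_right hC.le (Real.one_le_exp (by norm_num))
  · rw [H_func ht]
    have h3 : 3 ≤ Real.pi ^ 2 / t := by rw [le_div_iff₀ ht]; nlinarith
    have h4 := H_large_le h3
    have h5 : Real.pi / t ≤ Real.exp (Real.pi ^ 2 / t / 2) := by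
      have := Real.add_one_le_exp (Real.pi ^ 2 / t / 2)
      refine le_trans ?_ this
      have : Real.pi ^ 2 / t / 2 = Real.pi / t * (Real.pi / 2) := by ring
      rw [this]
      have : 0 < Real.pi / t := by positivity
      nlinarith
    calc _ ≤ Real.exp (Real.pi ^ 2 / t / 2) * (C * Real.exp (-(Real.pi ^ 2 / t) / 2)) := by
          have := (H_large_pos h3).le
          gcongr
      _ = C * 1 := by
          rw [mul_left_comm, ← Real.exp_add]; ring_nf; simp
      _ ≤ C * (Real.exp 2 * Real.exp (-t / 2)) := by
          gcongr
          rw [← Real.exp_add]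
          apply Real.one_le_exp; linarith
      _ = _ := by ring

lemma Sk_cont (k : ℕ) : ContinuousOn (Sk k) (Set.Ioi 0) :=
  fun _ ht => (Sk_hasDerivAt k ht).continuousAt.continuousWithinAt

lemma H_cont : ContinuousOn Hfun (Set.Ioi 0) := by
  have : ContinuousOn (fun t => Sk 0 t * (t ^ 2 * Sk 2 t - t * Sk 1 t) - (t * Sk 1 t) ^ 2) (Set.Ioi 0) := by
    have h0 := Sk_cont 0
    have h1 := Sk_cont 1
    have h2 := Sk_cont 2
    fun_prop
  exact this.congr fun t ht => H_eq ht

lemma mom_integrable (k : ℕ) :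
    IntegrableOn (fun u : ℝ => Hfun u * u ^ (-(1 : ℝ) / 2) * u ^ k) (Set.Ioi 0) := by
  obtain ⟨C, hC, hb⟩ := H_bound
  have h := (integrableOn_rpow_mul_exp_neg_mul_rpow (p := 1) (s := -(1 : ℝ) / 2 + k) (b := 1 / 2)
    (by have : (0 : ℝ) ≤ k := by positivity
        linarith) (by norm_num) (by norm_num)).const_mul C
  refine Integrable.mono' h ?_ ?_
  · refine ContinuousOn.aestronglyMeasurable ?_ measurableSet_Ioi
    refine (H_cont.mul ?_).mul (by fun_prop)
    exact continuousOn_id.rpow_const fun x hx => Or.inl (ne_of_gt hx)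
  · refine (ae_restrict_iff' measurableSet_Ioi).2 (Filter.Eventually.of_forall fun u hu => ?_)
    have hu : 0 < u := hu
    have := H_pos hu
    have := hb u hu
    rw [Real.norm_of_nonneg (by positivity), Real.rpow_add hu, Real.rpow_natCast, Real.rpow_one]
    calc _ ≤ C * Real.exp (-u / 2) * u ^ (-(1 : ℝ) / 2) * u ^ k := by gcongr
      _ = _ := by
        have : -u / 2 = -(1 / 2) * u := by ring
        rw [this]; ring

noncomputable def GG (x : ℝ) : ℝ :=
  ∫ u in Set.Ioi (0 : ℝ), Hfun u * u ^ (-(1 : ℝ) / 2) * Real.exp (-x / u)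

lemma GG_meas (x : ℝ) : AEStronglyMeasurable
    (fun u : ℝ => Hfun u * u ^ (-(1 : ℝ) / 2) * Real.exp (-x / u)) (volume.restrict (Set.Ioi 0)) := by
  refine ContinuousOn.aestronglyMeasurable ?_ measurableSet_Ioi
  refine (H_cont.mul ?_).mul ?_
  · exact continuousOn_id.rpow_const fun x hx => Or.inl (ne_of_gt hx)
  · exact (continuousOn_const.div continuousOn_id fun x hx => ne_of_gt hx).rexp

lemma GG_dom {x : ℝ} (hx : 0 ≤ x) : ∀ᵐ u ∂(volume.restrict (Set.Ioi (0 : ℝ))),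
    ‖Hfun u * u ^ (-(1 : ℝ) / 2) * Real.exp (-x / u)‖ ≤ Hfun u * u ^ (-(1 : ℝ) / 2) * u ^ 0 := by
  refine (ae_restrict_iff' measurableSet_Ioi).2 (Filter.Eventually.of_forall fun u hu => ?_)
  have hu : 0 < u := hu
  have := H_pos hu
  rw [Real.norm_of_nonneg (by positivity), pow_zero]
  gcongr
  apply Real.exp_le_one_iff.2
  exact div_nonpos_of_nonpos_of_nonneg (by linarith) hu.le

lemma GG_int {x : ℝ} (hx : 0 ≤ x) :
    IntegrableOn (fun u : ℝ => Hfun u * u ^ (-(1 : ℝ) / 2) * Real.exp (-x / u)) (Set.Ioi 0) :=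
  Integrable.mono' (mom_integrable 0) (GG_meas x) (GG_dom hx)

lemma GG_cont : ContinuousOn GG (Set.Ici 0) := by
  refine continuousOn_of_dominated (fun x _ => GG_meas x) (fun x hx => GG_dom hx) (mom_integrable 0) ?_
  refine Filter.Eventually.of_forall fun u => ?_
  fun_prop

lemma GG_pos {x : ℝ} (hx : 0 ≤ x) : 0 < GG x := by
  have hp : ∀ u ∈ Set.Ioi (0 : ℝ), 0 < Hfun u * u ^ (-(1 : ℝ) / 2) * Real.exp (-x / u) := by
    intro u hu
    have hu : 0 < u := hu
    have := H_pos hu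
    positivity
  unfold GG
  rw [setIntegral_pos_iff_support_of_nonneg_ae _ (GG_int hx)]
  · rw [Set.inter_eq_right.2]
    · simp
    · intro u hu
      exact (hp u hu).ne'
  · exact (ae_restrict_iff' measurableSet_Ioi).2 (Filter.Eventually.of_forall fun u hu => (hp u hu).le)

lemma GG_decay (k : ℕ) : ∃ M : ℝ, ∀ x, 0 < x → GG x ≤ M / x ^ k := by
  refine ⟨k.factorial * ∫ u in Set.Ioi (0 : ℝ), Hfun u * u ^ (-(1 : ℝ) / 2) * u ^ k, fun x hx => ?_⟩
  have h : GG x ≤ ∫ u in Set.Ioi (0 : ℝ), (k.factorial / x ^ k) * (Hfun u * u ^ (-(1 : ℝ) / 2) * u ^ k) := by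
    refine setIntegral_mono_on (GG_int hx.le) ((mom_integrable k).const_mul _) measurableSet_Ioi fun u hu => ?_
    have hu : 0 < u := hu
    have := H_pos hu
    have h1 := Real.pow_div_factorial_le_exp (x / u) (by positivity) k
    have h2 : Real.exp (-x / u) ≤ k.factorial / x ^ k * u ^ k := by
      rw [neg_div, Real.exp_neg]
      refine (inv_anti₀ (by positivity) h1).trans_eq ?_
      rw [div_pow]; field_simp
    calc _ ≤ Hfun u * u ^ (-(1 : ℝ) / 2) * (k.factorial / x ^ k * u ^ k) := by gcongr
      _ = _ := by ring
  rw [integral_const_mul] at h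
  exact h.trans_eq (by ring)

lemma GG_neg {v₁ v₂ a b : ℝ} (hv₂ : 0 < v₂) (hv : v₂ < v₁) (hb : 0 < b) (hab : b < a) :
    ∃ A, 0 < A ∧ v₁ * GG (a * A) - v₂ * GG (b * A) < 0 := by
  by_contra! hcon
  have hv1 : 0 < v₁ := hv₂.trans hv
  have ha : 0 < a := hb.trans hab
  set l := a / b with hl
  set r := v₂ / v₁ with hr
  have hl1 : 1 < l := by rw [hl, one_lt_div hb]; exact hab
  have hl0 : 0 < l := by linarith
  have hr0 : 0 < r := by positivity
  have step : ∀ x, 0 < x → r * GG x ≤ GG (l * x) := by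
    intro x hx
    have := hcon (x / b) (by positivity)
    have e1 : a * (x / b) = l * x := by rw [hl]; ring
    have e2 : b * (x / b) = x := by field_simp
    rw [e1, e2] at this
    rw [hr, div_mul_eq_mul_div, div_le_iff₀ hv1]
    linarith
  have iter : ∀ n : ℕ, r ^ n * GG 1 ≤ GG (l ^ n) := by
    intro n
    induction n with
    | zero => simp
    | succ n ih =>
      have := step (l ^ n) (by positivity)
      rw [pow_succ' l, pow_succ' r]
      nlinarith
  obtain ⟨k, hk⟩ := pow_unbounded_of_one_lt (2 / r) hl1
  obtain ⟨M, hM⟩ := GG_decay k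
  have hG := GG_pos (x := 1) (by norm_num)
  have hrl : 2 < r * l ^ k := by
    rw [div_lt_iff₀ hr0] at hk; linarith
  obtain ⟨n, hn⟩ := pow_unbounded_of_one_lt (M / GG 1) (one_lt_two (α := ℝ))
  have h1 := (iter n).trans (hM (l ^ n) (by positivity))
  rw [le_div_iff₀ (by positivity)] at h1
  have h2 : (2 : ℝ) ^ n ≤ (r * l ^ k) ^ n := by gcongr
  rw [div_lt_iff₀ hG] at hn
  have h3 : r ^ n * GG 1 * (l ^ n) ^ k = (r * l ^ k) ^ n * GG 1 := by
    rw [mul_pow, ← pow_mul, ← pow_mul, mul_comm n k]; ring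
  rw [h3] at h1
  nlinarith

lemma E_eq (v₁ v₂ κ₁ κ₂ : ℝ) {A : ℝ} (hA : 0 < A) :
    ∫ s in Set.Ioi (0 : ℝ), Hfun (A * s) * ((Real.pi * s) ^ (-(1 : ℝ) / 2) *
        (v₁ * Real.exp (-κ₁ ^ 2 / (4 * s)) - v₂ * Real.exp (-κ₂ ^ 2 / (4 * s)))) =
    (A⁻¹ * (Real.pi / A) ^ (-(1 : ℝ) / 2)) * (v₁ * GG (κ₁ ^ 2 / 4 * A) - v₂ * GG (κ₂ ^ 2 / 4 * A)) := by
  have hp := Real.pi_pos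
  have h := integral_comp_mul_left_Ioi (fun u => (Real.pi / A) ^ (-(1 : ℝ) / 2) *
    (v₁ * (Hfun u * u ^ (-(1 : ℝ) / 2) * Real.exp (-(κ₁ ^ 2 / 4 * A) / u)) -
     v₂ * (Hfun u * u ^ (-(1 : ℝ) / 2) * Real.exp (-(κ₂ ^ 2 / 4 * A) / u)))) 0 hA
  have hs : ∀ f : ℝ → ℝ, ∀ c : ℝ, ∫ u in Set.Ioi (0 : ℝ), c * f u = c * ∫ u in Set.Ioi (0 : ℝ), f u :=
    fun f c => integral_const_mul c f
  rw [mul_zero, hs (fun u => v₁ * (Hfun u * u ^ (-(1 : ℝ) / 2) * Real.exp (-(κ₁ ^ 2 / 4 * A) / u)) -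
     v₂ * (Hfun u * u ^ (-(1 : ℝ) / 2) * Real.exp (-(κ₂ ^ 2 / 4 * A) / u))), integral_sub ((GG_int (by positivity)).const_mul _)
    ((GG_int (by positivity)).const_mul _),
    hs (fun u => Hfun u * u ^ (-(1 : ℝ) / 2) * Real.exp (-(κ₁ ^ 2 / 4 * A) / u)),
    hs (fun u => Hfun u * u ^ (-(1 : ℝ) / 2) * Real.exp (-(κ₂ ^ 2 / 4 * A) / u))] at h
  rw [smul_eq_mul, ← mul_assoc] at h
  refine Eq.trans ?_ h
  refine setIntegral_congr_fun measurableSet_Ioi fun s hs => ?_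
  have hs : 0 < s := hs
  have e1 : Real.pi * s = (Real.pi / A) * (A * s) := by field_simp
  have e2 : ∀ κ : ℝ, -(κ ^ 2 / 4 * A) / (A * s) = -κ ^ 2 / (4 * s) := by
    intro κ; field_simp
  simp only [e2]
  rw [e1, Real.mul_rpow (by positivity) (by positivity)]
  ring


/-- Existence of a transition point for the double Yukawa potential: with
`v₁ > v₂ > 0`, `κ₁ > κ₂ > 0`, density
`ρ(s) := (πs)^{−1/2}(v₁e^{−κ₁²/(4s)} − v₂e^{−κ₂²/(4s)})` and
`E₂(A) := (1/2)∫₀^∞ H(As)ρ(s) ds`, the function `E₂` takes both strictly positive and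
strictly negative values on `(0,∞)` and has a zero (transition point) `A* > 0`. -/
theorem double_yukawa_exists_transition_point (v₁ v₂ κ₁ κ₂ : ℝ)
    (hv₂ : 0 < v₂) (hv : v₂ < v₁) (hκ₂ : 0 < κ₂) (hκ : κ₂ < κ₁) :
    let ρ : ℝ → ℝ := fun s =>
      (Real.pi * s) ^ (-(1 : ℝ) / 2) *
        (v₁ * Real.exp (-κ₁ ^ 2 / (4 * s)) - v₂ * Real.exp (-κ₂ ^ 2 / (4 * s)))
    let E₂ : ℝ → ℝ := fun A => (1 / 2) * ∫ s in Set.Ioi (0 : ℝ), Hfun (A * s) * ρ s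
    (∃ A : ℝ, 0 < A ∧ 0 < E₂ A) ∧ (∃ A : ℝ, 0 < A ∧ E₂ A < 0) ∧
      ∃ Astar : ℝ, 0 < Astar ∧ E₂ Astar = 0 := by

  intro ρ E₂
  have hp := Real.pi_pos
  set F : ℝ → ℝ := fun A => v₁ * GG (κ₁ ^ 2 / 4 * A) - v₂ * GG (κ₂ ^ 2 / 4 * A) with hF
  have hE : ∀ A, 0 < A → ∃ c : ℝ, 0 < c ∧ E₂ A = c * F A := by
    intro A hA
    refine ⟨1 / 2 * (A⁻¹ * (Real.pi / A) ^ (-(1 : ℝ) / 2)), by positivity, ?_⟩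
    have := E_eq v₁ v₂ κ₁ κ₂ hA
    simp only [E₂, ρ, hF]
    rw [this]; ring
  have hFc : ContinuousOn F (Set.Ici 0) := by
    have hc : ∀ κ : ℝ, ContinuousOn (fun A => GG (κ ^ 2 / 4 * A)) (Set.Ici 0) := fun κ =>
      GG_cont.comp (by fun_prop) fun A hA => by
        have hA : 0 ≤ A := hA
        show 0 ≤ κ ^ 2 / 4 * A
        positivity
    exact ((hc κ₁).const_mul v₁).sub ((hc κ₂).const_mul v₂)
  have hF0 : 0 < F 0 := by
    simp only [hF, mul_zero]
    have := GG_pos le_rfl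
    nlinarith
  obtain ⟨B, hB, hFB⟩ : ∃ B, 0 < B ∧ F B < 0 :=
    GG_neg hv₂ hv (by positivity) (by nlinarith)
  obtain ⟨A, hA, hFA⟩ : ∃ A, 0 < A ∧ 0 < F A := by
    have h1 : ∀ᶠ x in nhdsWithin 0 (Set.Ioi 0), 0 < F x :=
      ((hFc 0 Set.self_mem_Ici).mono Set.Ioi_subset_Ici_self).eventually (lt_mem_nhds hF0)
    obtain ⟨A, h1, h2⟩ := (h1.and self_mem_nhdsWithin).exists
    exact ⟨A, h2, h1⟩
  refine ⟨⟨A, hA, ?_⟩, ⟨B, hB, ?_⟩, ?_⟩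
  · obtain ⟨c, hc, e⟩ := hE A hA
    rw [e]; positivity
  · obtain ⟨c, hc, e⟩ := hE B hB
    rw [e]; exact mul_neg_of_pos_of_neg hc hFB
  · have hz : (0 : ℝ) ∈ F '' Set.Ioi 0 :=
      isPreconnected_Ioi.intermediate_value (a := B) (b := A) hB hA
        (hFc.mono Set.Ioi_subset_Ici_self) ⟨hFB.le, hFA.le⟩
    obtain ⟨x, hx, hx0⟩ := hz
    obtain ⟨c, hc, e⟩ := hE x hx
    exact ⟨x, hx, by rw [e, hx0, mul_zero]⟩
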